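/- arXiv:2603.29348 — 5 statements merged into one kernel-verified Lean document; each statement's English description precedes it below -/
import Mathlib

section
/- Let ψ : ℝ^n → ℝ be μ-strongly convex (μ > 0), let C ⊆ ℝ^n be nonempty, closed and convex, let x ∈ ℝ^n and x* ∈ ∂ψ(x). A point x̂ ∈ C is the Bregman projection Π_C^{x*}(x) of x onto C if and only if there exists x̂* ∈ ∂ψ(x̂) such that ⟨x̂* − x*, y − x̂⟩ ≥ 0 for all y ∈ C; and this holds if and only if there exists x̂* ∈ ∂ψ(x̂) such that D_ψ^{x̂*}(x̂, y) ≤ D_ψ^{x*}(x, y) − D_ψ^{x*}(x, x̂) for all y ∈ C. -/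
/-!
The Bregman projection minimizes the convex function `f = D_ψ^p(x, ·)` over `C`, so the content is
the first-order optimality condition: a minimizer `z` of `f` over `C` admits a subgradient `r` of
`f` that is nonnegative on the directions `y - z`, `y ∈ C`. To find `r`, insert an affine function
between the constant `f z` on `C` and `f` on the whole space, by separating the strict epigraph of
`f` from the hypograph of that constant. The subgradients of `f` are those of `ψ` shifted by `-p`,
which gives the first variational inequality; the second is the same inequality by the identity
`D_ψ^p(x, y) - D_ψ^p(x, z) - D_ψ^q(z, y) = (q - p)(y - z)`.
-/

open MeasureTheory ProbabilityTheory RealInnerProductSpace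
open scoped BigOperators

noncomputable section

/-- `xs` is a subgradient of `ψ` at `x`: `ψ(y) ≥ ψ(x) + ⟨xs, y - x⟩` for all `y`. -/
def IsSubgrad {n : ℕ} (ψ : EuclideanSpace ℝ (Fin n) → ℝ) (x xs : EuclideanSpace ℝ (Fin n)) : Prop :=
  ∀ y, ψ x + ⟪xs, y - x⟫ ≤ ψ y

/-- Bregman distance `D_ψ^{xs}(x, y) = ψ(y) - ψ(x) - ⟨xs, y - x⟩`. -/
def Breg {n : ℕ} (ψ : EuclideanSpace ℝ (Fin n) → ℝ) (x xs y : EuclideanSpace ℝ (Fin n)) : ℝ :=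
  ψ y - ψ x - ⟪xs, y - x⟫

/-- `ψ` is `α`-strongly convex:
`ψ(y) ≥ ψ(x) + ⟨xs, y - x⟩ + (α/2)‖y - x‖²` for all `x, y` and all subgradients `xs ∈ ∂ψ(x)`. -/
def SubgradStrongConvex {n : ℕ} (ψ : EuclideanSpace ℝ (Fin n) → ℝ) (α : ℝ) : Prop :=
  ∀ x y xs, IsSubgrad ψ x xs → ψ x + ⟪xs, y - x⟫ + α / 2 * ‖y - x‖ ^ 2 ≤ ψ y

/-- Fenchel conjugate `ψ*(p) = sup_z (⟨p, z⟩ - ψ(z))`. -/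
def fenchel {n : ℕ} (ψ : EuclideanSpace ℝ (Fin n) → ℝ) (p : EuclideanSpace ℝ (Fin n)) : ℝ :=
  ⨆ z, (⟪p, z⟫ - ψ z)

/-- `xhat` is the Bregman projection of `x` onto `C` w.r.t. `ψ` and the subgradient `xs`:
it belongs to `C` and minimizes `y ↦ D_ψ^{xs}(x, y)` over `C`. -/
def IsBregProj {n : ℕ} (ψ : EuclideanSpace ℝ (Fin n) → ℝ) (x xs : EuclideanSpace ℝ (Fin n))
    (C : Set (EuclideanSpace ℝ (Fin n))) (xhat : EuclideanSpace ℝ (Fin n)) : Prop :=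
  xhat ∈ C ∧ ∀ y ∈ C, Breg ψ x xs xhat ≤ Breg ψ x xs y

/-- The proximity objective `F(x) = (1/m) ∑_{i=1}^m f_i(x)`. -/
def Fobj {n m : ℕ} (f : Fin m → EuclideanSpace ℝ (Fin n) → ℝ) (v : EuclideanSpace ℝ (Fin n)) : ℝ :=
  (m : ℝ)⁻¹ * ∑ i, f i v

/-- The set of (global) minimizers of `F = (1/m) ∑ f_i`. -/
def ArgminSet {n m : ℕ} (f : Fin m → EuclideanSpace ℝ (Fin n) → ℝ) :
    Set (EuclideanSpace ℝ (Fin n)) :=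
  {z | ∀ y, Fobj f z ≤ Fobj f y}

/-- Squared Bregman distance from `z` (with subgradient `zs`) to a set `X`:
`inf_{w ∈ X} D_ψ^{zs}(z, w)`. -/
def distSq {n : ℕ} (ψ : EuclideanSpace ℝ (Fin n) → ℝ) (z zs : EuclideanSpace ℝ (Fin n))
    (X : Set (EuclideanSpace ℝ (Fin n))) : ℝ :=
  ⨅ w : X, Breg ψ z zs (w : EuclideanSpace ℝ (Fin n))

section Affine

variable {E : Type*} [AddCommGroup E] [Module ℝ E] [TopologicalSpace E]

lemma exists_affine_lt_iff_of_apply_zero_one_neg (f : StrongDual ℝ (E × ℝ)) (hf : f (0, 1) < 0)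
    (u : ℝ) : ∃ (l : StrongDual ℝ E) (c : ℝ), ∀ y r, f (y, r) < u ↔ l y + c < r := by
  set b := f (0, 1)
  have hsplit (y : E) (r : ℝ) : f (y, r) = f (y, 0) + r * b := by
    rw [← smul_eq_mul, ← map_smul, ← map_add]
    simp
  refine ⟨-(b⁻¹ • f.comp (.inl ℝ E ℝ)), u / b, fun y r ↦ ?_⟩
  calc f (y, r) < u ↔ r * b < u - f (y, 0) := by rw [hsplit, lt_sub_iff_add_lt']
    _ ↔ (u - f (y, 0)) / b < r := (div_lt_iff_of_neg hf).symm
    _ ↔ -(b⁻¹ * f (y, 0)) + u / b < r := by rw [sub_div, div_eq_inv_mul (f _), neg_add_eq_sub]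

lemma isOpen_strict_epigraph {X : Type*} [TopologicalSpace X] {s : Set X} {f : X → ℝ}
    (hs : IsOpen s) (hf : ContinuousOn f s) : IsOpen {p : X × ℝ | p.1 ∈ s ∧ f p.1 < p.2} := by
  have hdiff : ContinuousOn (fun p : X × ℝ ↦ p.2 - f p.1) (Prod.fst ⁻¹' s) :=
    continuousOn_snd.sub (hf.comp continuousOn_fst fun _ hp ↦ hp)
  have hepi : {p : X × ℝ | p.1 ∈ s ∧ f p.1 < p.2} =
      Prod.fst ⁻¹' s ∩ (fun p ↦ p.2 - f p.1) ⁻¹' Set.Ioi 0 :=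
    Set.ext fun _ ↦ and_congr_right fun _ ↦ sub_pos.symm
  rw [hepi]
  exact hdiff.isOpen_inter_preimage (hs.preimage continuous_fst) isOpen_Ioi

variable [IsTopologicalAddGroup E] [ContinuousSMul ℝ E]

theorem exists_affine_between_concaveOn_convexOn {s C : Set E} {f g : E → ℝ} (hs : IsOpen s)
    (hf : ConvexOn ℝ s f) (hfc : ContinuousOn f s) (hg : ConcaveOn ℝ C g) (hsC : (s ∩ C).Nonempty)
    (hgf : ∀ y ∈ s ∩ C, g y ≤ f y) :
    ∃ (l : StrongDual ℝ E) (c : ℝ), (∀ y ∈ s, l y + c ≤ f y) ∧ ∀ y ∈ C, g y ≤ l y + c := by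
  have hdisj : Disjoint {p : E × ℝ | p.1 ∈ s ∧ f p.1 < p.2} {p | p.1 ∈ C ∧ p.2 ≤ g p.1} :=
    Set.disjoint_left.2 fun p hps hpC ↦
      ((hgf p.1 ⟨hps.1, hpC.1⟩).trans_lt hps.2).not_ge hpC.2
  obtain ⟨φ, u, hepi, hhypo⟩ := geometric_hahn_banach_open hf.convex_strict_epigraph
    (isOpen_strict_epigraph hs hfc) hg.convex_hypograph hdisj
  -- The hyperplane is not vertical, since it separates two points above `z ∈ s ∩ C`.
  have hφ : φ (0, 1) < 0 := by
    obtain ⟨z, hzs, hzC⟩ := hsC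
    have hlt : φ (z, f z + 1) < φ (z, g z) :=
      (hepi _ ⟨hzs, lt_add_one (f z)⟩).trans_le (hhypo _ ⟨hzC, le_rfl⟩)
    have hdir : (z, f z + 1) - (z, g z) = (f z + 1 - g z) • ((0, 1) : E × ℝ) := by simp
    rw [← sub_neg, ← map_sub, hdir, map_smul, smul_eq_mul] at hlt
    exact neg_of_mul_neg_right hlt (by linarith [hgf z ⟨hzs, hzC⟩])
  obtain ⟨l, c, hlc⟩ := exists_affine_lt_iff_of_apply_zero_one_neg φ hφ u
  refine ⟨l, c, fun y hy ↦ ?_, fun y hy ↦ ?_⟩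
  · exact le_of_forall_gt_imp_ge_of_dense fun r hr ↦ ((hlc y r).1 (hepi _ ⟨hy, hr⟩)).le
  · exact le_of_not_gt fun h ↦ ((hlc y (g y)).2 h).not_ge (hhypo _ ⟨hy, le_rfl⟩)

end Affine

section Bregman

variable {E : Type*} [AddCommGroup E] [Module ℝ E] [TopologicalSpace E]

/-- The functional `p` is a subgradient of `f` at `x`. This is `IsSubgrad` with the subgradient
taken in the dual space, so that no inner product is needed. -/
def IsSubgradientAt (f : E → ℝ) (p : StrongDual ℝ E) (x : E) : Prop :=
  ∀ y, f x + p (y - x) ≤ f y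

/-- The Bregman distance `D_ψ^p(x, y)` for a functional `p`, in the order of arguments of `Breg`. -/
def bregmanDist (ψ : E → ℝ) (x : E) (p : StrongDual ℝ E) (y : E) : ℝ :=
  ψ y - ψ x - p (y - x)

/-- `z` is a Bregman projection of `x` onto `C`, as in `IsBregProj`: a predicate, which asserts
neither existence nor uniqueness of the projection. -/
def IsBregmanProj (ψ : E → ℝ) (x : E) (p : StrongDual ℝ E) (C : Set E) (z : E) : Prop :=
  z ∈ C ∧ ∀ y ∈ C, bregmanDist ψ x p z ≤ bregmanDist ψ x p y

lemma bregmanDist_sub_sub (ψ : E → ℝ) (x z y : E) (p q : StrongDual ℝ E) :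
    bregmanDist ψ x p y - bregmanDist ψ x p z - bregmanDist ψ z q y = (q - p) (y - z) := by
  simp only [bregmanDist, sub_apply, map_sub]
  ring

lemma isSubgradientAt_bregmanDist_iff {ψ : E → ℝ} {x z : E} {p q : StrongDual ℝ E} :
    IsSubgradientAt (bregmanDist ψ x p) (q - p) z ↔ IsSubgradientAt ψ q z := by
  refine forall_congr' fun y ↦ ?_
  rw [← bregmanDist_sub_sub ψ x z y p q]
  simp only [bregmanDist]
  constructor <;> intro h <;> linarith

lemma convexOn_bregmanDist {s : Set E} {ψ : E → ℝ} (hψ : ConvexOn ℝ s ψ) (x : E)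
    (p : StrongDual ℝ E) : ConvexOn ℝ s (bregmanDist ψ x p) := by
  have haff : bregmanDist ψ x p = fun y ↦ (ψ - p) y + (p x - ψ x) := by
    ext y
    simp only [bregmanDist, map_sub, Pi.sub_apply]
    ring
  rw [haff]
  exact (hψ.sub (p.toLinearMap.concaveOn hψ.1)).add_const _

lemma IsSubgradientAt.isMinOn {f : E → ℝ} {C : Set E} {z : E} {r : StrongDual ℝ E}
    (hr : IsSubgradientAt f r z) (hC : ∀ y ∈ C, 0 ≤ r (y - z)) : IsMinOn f C z :=
  fun y hy ↦ (le_add_of_nonneg_right (hC y hy)).trans (hr y)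

variable [IsTopologicalAddGroup E] [ContinuousSMul ℝ E]

theorem isMinOn_iff_exists_isSubgradientAt {f : E → ℝ} {C : Set E} {z : E}
    (hf : ConvexOn ℝ Set.univ f) (hfc : Continuous f) (hC : Convex ℝ C) (hz : z ∈ C) :
    IsMinOn f C z ↔ ∃ r, IsSubgradientAt f r z ∧ ∀ y ∈ C, 0 ≤ r (y - z) := by
  refine ⟨fun hmin ↦ ?_, fun ⟨r, hr, hrC⟩ ↦ hr.isMinOn hrC⟩
  obtain ⟨l, c, hlf, hlC⟩ := exists_affine_between_concaveOn_convexOn isOpen_univ hf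
    hfc.continuousOn (concaveOn_const (f z) hC) ⟨z, trivial, hz⟩ fun y hy ↦ hmin hy.2
  have hlz : l z + c = f z := le_antisymm (hlf z trivial) (hlC z hz)
  refine ⟨l, fun y ↦ ?_, fun y hy ↦ ?_⟩
  · linarith [hlf y trivial, map_sub l y z]
  · linarith [hlC y hy, map_sub l y z]

theorem isBregmanProj_iff_exists_isSubgradientAt {ψ : E → ℝ} {C : Set E} {z : E}
    (hψ : ConvexOn ℝ Set.univ ψ) (hψc : Continuous ψ) (hC : Convex ℝ C) (x : E)
    (p : StrongDual ℝ E) (hz : z ∈ C) :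
    IsBregmanProj ψ x p C z ↔
      ∃ q, IsSubgradientAt ψ q z ∧ ∀ y ∈ C, 0 ≤ (q - p) (y - z) := by
  have hcont : Continuous (bregmanDist ψ x p) := by
    unfold bregmanDist
    fun_prop
  calc IsBregmanProj ψ x p C z ↔ IsMinOn (bregmanDist ψ x p) C z := and_iff_right hz
    _ ↔ ∃ r, IsSubgradientAt (bregmanDist ψ x p) r z ∧ ∀ y ∈ C, 0 ≤ r (y - z) :=
      isMinOn_iff_exists_isSubgradientAt (convexOn_bregmanDist hψ x p) hcont hC hz
    _ ↔ ∃ q, IsSubgradientAt ψ q z ∧ ∀ y ∈ C, 0 ≤ (q - p) (y - z) := by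
      rw [(Equiv.subRight p).surjective.exists]
      simp only [Equiv.subRight_apply, isSubgradientAt_bregmanDist_iff]

theorem stmt1_general {ψ : E → ℝ} {C : Set E} {z : E}
    (hψ : ConvexOn ℝ Set.univ ψ) (hψc : Continuous ψ) (hC : Convex ℝ C) (x : E)
    (p : StrongDual ℝ E) (hz : z ∈ C) :
    (IsBregmanProj ψ x p C z ↔
      ∃ q, IsSubgradientAt ψ q z ∧ ∀ y ∈ C, 0 ≤ (q - p) (y - z)) ∧
    (IsBregmanProj ψ x p C z ↔
      ∃ q, IsSubgradientAt ψ q z ∧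
        ∀ y ∈ C, bregmanDist ψ z q y ≤ bregmanDist ψ x p y - bregmanDist ψ x p z) := by
  have hvar := isBregmanProj_iff_exists_isSubgradientAt hψ hψc hC x p hz
  refine ⟨hvar, ?_⟩
  simpa only [← bregmanDist_sub_sub ψ x, sub_nonneg] using hvar

end Bregman

/-- characterization of the Bregman projection onto a nonempty closed convex set
by variational inequalities. -/
theorem stmt1 {n : ℕ} (ψ : EuclideanSpace ℝ (Fin n) → ℝ) (μ : ℝ) (hμ : 0 < μ)
    (hψconv : ConvexOn ℝ Set.univ ψ) (hsc : SubgradStrongConvex ψ μ)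
    (C : Set (EuclideanSpace ℝ (Fin n))) (hCne : C.Nonempty) (hCclosed : IsClosed C)
    (hCconv : Convex ℝ C)
    (x xs : EuclideanSpace ℝ (Fin n)) (hxs : IsSubgrad ψ x xs)
    (xhat : EuclideanSpace ℝ (Fin n)) (hxhatC : xhat ∈ C) :
    (IsBregProj ψ x xs C xhat ↔
      ∃ xhs, IsSubgrad ψ xhat xhs ∧ ∀ y ∈ C, 0 ≤ ⟪xhs - xs, y - xhat⟫) ∧
    (IsBregProj ψ x xs C xhat ↔
      ∃ xhs, IsSubgrad ψ xhat xhs ∧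
        ∀ y ∈ C, Breg ψ xhat xhs y ≤ Breg ψ x xs y - Breg ψ x xs xhat) := by
  have h := stmt1_general hψconv (continuousOn_univ.1 (hψconv.continuousOn isOpen_univ)) hCconv x
    (InnerProductSpace.toDual ℝ _ xs) hxhatC
  simp only [(InnerProductSpace.toDual ℝ _).surjective.exists, ← map_sub] at h
  exact h
end
end

section
/- Let f_1, …, f_m : ℝ^n → ℝ be convex and differentiable with L_i-Lipschitz gradients (L_i > 0), nonnegative, with f_i(x) = 0 if and only if x ∈ C_i, and suppose C = ∩_{i=1}^m C_i is nonempty. Fix x ∈ ℝ^n, a subset J ⊆ {1,…,m}, and weights w_i > 0 (i ∈ J) with ∑_{i∈J} w_i = 1. Define α = ∑_{i∈J} w_i ∇f_i(x), β = ⟨α, x⟩ − ∑_{i∈J} (w_i/L_i)‖∇f_i(x)‖², and the halfspace H = {z ∈ ℝ^n : ⟨α, z⟩ ≤ β}. Then C ⊆ H; moreover, if ∑_{i∈J} w_i‖∇f_i(x)‖² > 0, then ⟨α, x⟩ > β, i.e., x ∉ H. -/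
/-!
The gradient of a convex function with `L`-Lipschitz gradient is cocoercive (Baillon–Haddad):
`‖∇f(x) - ∇f(y)‖² / L ≤ ⟪∇f(x) - ∇f(y), x - y⟫`. To see this, compare two bounds for `f` at the
point `y - L⁻¹ (∇f(y) - ∇f(x))`: the tangent plane at `x` from below, and the quadratic model at `y`
from above. This sharpens the tangent inequality by `‖∇f(x) - ∇f(y)‖² / (2L)`, and adding the two
inequalities obtained by exchanging `x` and `y` gives the claim.

If `z` minimizes every `fᵢ`, then `∇fᵢ(z) = 0`, so cocoercivity reads
`‖∇fᵢ(x)‖² / Lᵢ ≤ ⟪∇fᵢ(x), x - z⟫`: each `fᵢ` cuts `x` off from `z` by a halfspace, and `H` is the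
weighted sum of these halfspaces.
-/

open MeasureTheory ProbabilityTheory RealInnerProductSpace
open scoped BigOperators

noncomputable section

lemma inner_le_inner_add_of_norm_sub_le {E : Type*} [NormedAddCommGroup E] [InnerProductSpace ℝ E]
    {v w h : E} {K : ℝ} (hvw : ‖v - w‖ ≤ K * ‖h‖) : ⟪v, h⟫ ≤ ⟪w, h⟫ + K * ‖h‖ ^ 2 := by
  rw [← sub_le_iff_le_add', ← inner_sub_left]
  calc ⟪v - w, h⟫ ≤ ‖v - w‖ * ‖h‖ := real_inner_le_norm _ _
    _ ≤ K * ‖h‖ * ‖h‖ := by gcongr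
    _ = K * ‖h‖ ^ 2 := by ring

section Gradient

variable {E : Type*} [NormedAddCommGroup E] [InnerProductSpace ℝ E] [CompleteSpace E]
  {f : E → ℝ} {f' : E → E} {L : ℝ}

lemma hasDerivAt_comp_lineMap_of_hasGradientAt {x y v : E} {t : ℝ}
    (hf : HasGradientAt f v (AffineMap.lineMap x y t)) :
    HasDerivAt (fun s : ℝ => f (AffineMap.lineMap x y s)) ⟪v, y - x⟫ t :=
  hf.hasFDerivAt.comp_hasDerivAt t AffineMap.hasDerivAt_lineMap

lemma hasGradientAt_eq_zero_of_isLocalMin {x v : E} (hmin : IsLocalMin f x)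
    (hf : HasGradientAt f v x) : v = 0 :=
  (InnerProductSpace.toDual ℝ E).map_eq_zero_iff.1 (hmin.hasFDerivAt_eq_zero hf.hasFDerivAt)

lemma add_inner_gradient_le_of_convexOn {s : Set E} (hconv : ConvexOn ℝ s f) {x y v : E}
    (hx : x ∈ s) (hy : y ∈ s) (hf : HasGradientAt f v x) : f x + ⟪v, y - x⟫ ≤ f y := by
  have hline : ConvexOn ℝ (AffineMap.lineMap x y ⁻¹' s)
      (fun t : ℝ => f (AffineMap.lineMap x y t)) :=
    hconv.comp_affineMap (AffineMap.lineMap x y)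
  have hderiv : HasDerivAt (fun t : ℝ => f (AffineMap.lineMap x y t)) ⟪v, y - x⟫ 0 :=
    hasDerivAt_comp_lineMap_of_hasGradientAt (by rwa [AffineMap.lineMap_apply_zero])
  have hslope := hline.le_slope_of_hasDerivAt (x := 0) (y := 1) (by simpa using hx)
    (by simpa using hy) one_pos hderiv
  simp only [slope_def_field, AffineMap.lineMap_apply_one, AffineMap.lineMap_apply_zero, sub_zero,
    div_one] at hslope
  linarith

lemma le_add_inner_gradient_add_norm_sq {x y : E}
    (hf : ∀ z ∈ segment ℝ x y, HasGradientAt f (f' z) z)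
    (hlip : ∀ z ∈ segment ℝ x y, ‖f' z - f' x‖ ≤ L * ‖z - x‖) :
    f y ≤ f x + ⟪f' x, y - x⟫ + L / 2 * ‖y - x‖ ^ 2 := by
  have hmem {t : ℝ} (ht : t ∈ Set.Icc (0 : ℝ) 1) : AffineMap.lineMap x y t ∈ segment ℝ x y := by
    simpa only [segment_eq_image_lineMap] using Set.mem_image_of_mem _ ht
  have hderiv {t : ℝ} (ht : t ∈ Set.Icc (0 : ℝ) 1) :
      HasDerivAt (fun s : ℝ => f (AffineMap.lineMap x y s))
        ⟪f' (AffineMap.lineMap x y t), y - x⟫ t :=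
    hasDerivAt_comp_lineMap_of_hasGradientAt (hf _ (hmem ht))
  have hmodel (t : ℝ) : HasDerivAt
      (fun s : ℝ => f x + s * ⟪f' x, y - x⟫ + s ^ 2 * (L / 2 * ‖y - x‖ ^ 2))
      (⟪f' x, y - x⟫ + L * t * ‖y - x‖ ^ 2) t := by
    have hlinear := ((hasDerivAt_id t).mul_const ⟪f' x, y - x⟫).const_add (f x)
    have hquadratic := (hasDerivAt_pow 2 t).mul_const (L / 2 * ‖y - x‖ ^ 2)
    refine (hlinear.add hquadratic).congr_deriv ?_
    push_cast
    ring
  have hinner {t : ℝ} (ht : t ∈ Set.Icc (0 : ℝ) 1) :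
      ⟪f' (AffineMap.lineMap x y t), y - x⟫ ≤ ⟪f' x, y - x⟫ + L * t * ‖y - x‖ ^ 2 := by
    have hdist : ‖AffineMap.lineMap x y t - x‖ = t * ‖y - x‖ := by
      rw [← dist_eq_norm, dist_lineMap_left, Real.norm_of_nonneg ht.1, dist_comm, dist_eq_norm]
    apply inner_le_inner_add_of_norm_sub_le
    rw [mul_assoc, ← hdist]
    exact hlip _ (hmem ht)
  have hle := image_le_of_deriv_right_le_deriv_boundary
    (fun t ht => (hderiv ht).continuousAt.continuousWithinAt)
    (fun t ht => (hderiv (Set.Ico_subset_Icc_self ht)).hasDerivWithinAt)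
    (by simp) (fun t _ => (hmodel t).continuousAt.continuousWithinAt)
    (fun t _ => (hmodel t).hasDerivWithinAt)
    (fun t ht => hinner (Set.Ico_subset_Icc_self ht))
    (Set.right_mem_Icc.2 zero_le_one)
  simpa using hle

lemma add_inner_gradient_add_norm_sq_le (hL : 0 < L) (hconv : ConvexOn ℝ Set.univ f)
    (hf : ∀ z, HasGradientAt f (f' z) z) (hlip : ∀ z w, ‖f' z - f' w‖ ≤ L * ‖z - w‖) (x y : E) :
    f x + ⟪f' x, y - x⟫ + ‖f' x - f' y‖ ^ 2 / (2 * L) ≤ f y := by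
  set d := f' y - f' x
  have hlower : f x + ⟪f' x, (y - L⁻¹ • d) - x⟫ ≤ f (y - L⁻¹ • d) :=
    add_inner_gradient_le_of_convexOn hconv (Set.mem_univ _) (Set.mem_univ _) (hf x)
  have hupper : f (y - L⁻¹ • d) ≤
      f y + ⟪f' y, (y - L⁻¹ • d) - y⟫ + L / 2 * ‖(y - L⁻¹ • d) - y‖ ^ 2 :=
    le_add_inner_gradient_add_norm_sq (fun z _ => hf z) (fun z _ => hlip z y)
  have hinner : ⟪f' y, d⟫ - ⟪f' x, d⟫ = ‖d‖ ^ 2 := by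
    rw [← inner_sub_left, real_inner_self_eq_norm_sq]
  have hlower' : f x + (⟪f' x, y - x⟫ - L⁻¹ * ⟪f' x, d⟫) ≤ f (y - L⁻¹ • d) := by
    rwa [sub_right_comm, inner_sub_right, real_inner_smul_right] at hlower
  have hupper' : f (y - L⁻¹ • d) ≤ f y - L⁻¹ * ⟪f' y, d⟫ + L / 2 * (L⁻¹ * ‖d‖) ^ 2 := by
    rwa [sub_sub_cancel_left, inner_neg_right, real_inner_smul_right, norm_neg, norm_smul,
      Real.norm_of_nonneg (inv_nonneg.2 hL.le), ← sub_eq_add_neg] at hupper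
  have hgain : ‖f' x - f' y‖ ^ 2 / (2 * L) =
      L⁻¹ * (⟪f' y, d⟫ - ⟪f' x, d⟫) - L / 2 * (L⁻¹ * ‖d‖) ^ 2 := by
    rw [hinner, norm_sub_rev]
    field_simp
    ring
  linarith

lemma norm_gradient_sub_sq_div_le_inner (hL : 0 < L) (hconv : ConvexOn ℝ Set.univ f)
    (hf : ∀ z, HasGradientAt f (f' z) z) (hlip : ∀ z w, ‖f' z - f' w‖ ≤ L * ‖z - w‖) (x y : E) :
    ‖f' x - f' y‖ ^ 2 / L ≤ ⟪f' x - f' y, x - y⟫ := by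
  have hxy := add_inner_gradient_add_norm_sq_le hL hconv hf hlip x y
  have hyx := add_inner_gradient_add_norm_sq_le hL hconv hf hlip y x
  have hhalves : ‖f' x - f' y‖ ^ 2 / L =
      ‖f' x - f' y‖ ^ 2 / (2 * L) + ‖f' x - f' y‖ ^ 2 / (2 * L) := by
    field_simp
    ring
  rw [norm_sub_rev (f' y)] at hyx
  rw [← neg_sub x y, inner_neg_right] at hxy
  rw [inner_sub_left]
  linarith

lemma norm_gradient_sq_div_le_inner_of_isMinOn (hL : 0 < L) (hconv : ConvexOn ℝ Set.univ f)
    (hf : ∀ z, HasGradientAt f (f' z) z) (hlip : ∀ z w, ‖f' z - f' w‖ ≤ L * ‖z - w‖) (x : E)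
    {z : E} (hz : IsMinOn f Set.univ z) : ‖f' x‖ ^ 2 / L ≤ ⟪f' x, x - z⟫ := by
  have hgrad : f' z = 0 :=
    hasGradientAt_eq_zero_of_isLocalMin (hz.isLocalMin Filter.univ_mem) (hf z)
  simpa only [hgrad, sub_zero] using norm_gradient_sub_sq_div_le_inner hL hconv hf hlip x z

end Gradient

section WeightedSum

variable {ι : Type*} {J : Finset ι}

lemma inner_sum_smul_le_of_le_inner_sub {E : Type*} [NormedAddCommGroup E] [InnerProductSpace ℝ E]
    {w c : ι → ℝ} {a : ι → E} {x z : E} (hw : ∀ i ∈ J, 0 ≤ w i)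
    (h : ∀ i ∈ J, c i ≤ ⟪a i, x - z⟫) :
    ⟪∑ i ∈ J, w i • a i, z⟫ ≤ ⟪∑ i ∈ J, w i • a i, x⟫ - ∑ i ∈ J, w i * c i := by
  rw [le_sub_comm, ← inner_sub_right, sum_inner]
  simp only [real_inner_smul_left]
  exact Finset.sum_le_sum fun i hi => mul_le_mul_of_nonneg_left (h i hi) (hw i hi)

lemma sum_div_pos_of_sum_pos {𝕜 : Type*} [Field 𝕜] [LinearOrder 𝕜] [IsStrictOrderedRing 𝕜]
    {a L : ι → 𝕜} (ha : ∀ i ∈ J, 0 ≤ a i) (hL : ∀ i ∈ J, 0 < L i) (h : 0 < ∑ i ∈ J, a i) :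
    0 < ∑ i ∈ J, a i / L i := by
  obtain ⟨i, hi, hai⟩ : ∃ i ∈ J, 0 < a i :=
    Finset.exists_lt_of_sum_lt (Finset.sum_const_zero.trans_lt h)
  exact Finset.sum_pos' (fun j hj => div_nonneg (ha j hj) (hL j hj).le)
    ⟨i, hi, div_pos hai (hL i hi)⟩

end WeightedSum

theorem stmt4_general {ι E : Type*} [NormedAddCommGroup E] [InnerProductSpace ℝ E]
    [CompleteSpace E] (f : ι → E → ℝ) (C : ι → Set E) (L : ι → ℝ) (f' : ι → E → E)
    (x : E) (J : Finset ι) (w : ι → ℝ) (hL : ∀ i ∈ J, 0 < L i)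
    (hfconv : ∀ i ∈ J, ConvexOn ℝ Set.univ (f i))
    (hdiff : ∀ i ∈ J, ∀ z, HasGradientAt (f i) (f' i z) z)
    (hlip : ∀ i ∈ J, ∀ z w, ‖f' i z - f' i w‖ ≤ L i * ‖z - w‖)
    (hmin : ∀ i ∈ J, ∀ z ∈ C i, IsMinOn (f i) Set.univ z)
    (hw : ∀ i ∈ J, 0 ≤ w i) :
    (∀ z ∈ ⋂ i ∈ J, C i,
      ⟪∑ i ∈ J, w i • f' i x, z⟫ ≤
        ⟪∑ i ∈ J, w i • f' i x, x⟫ - ∑ i ∈ J, w i / L i * ‖f' i x‖ ^ 2) ∧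
    ((0 < ∑ i ∈ J, w i * ‖f' i x‖ ^ 2) →
      ⟪∑ i ∈ J, w i • f' i x, x⟫ - ∑ i ∈ J, w i / L i * ‖f' i x‖ ^ 2 <
        ⟪∑ i ∈ J, w i • f' i x, x⟫) := by
  refine ⟨fun z hz => ?_, fun hpos => sub_lt_self _ ?_⟩
  · have hcut (i) (hi : i ∈ J) : ‖f' i x‖ ^ 2 / L i ≤ ⟪f' i x, x - z⟫ :=
      norm_gradient_sq_div_le_inner_of_isMinOn (hL i hi) (hfconv i hi) (hdiff i hi) (hlip i hi) x
        (hmin i hi z (Set.mem_iInter₂.1 hz i hi))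
    simpa only [mul_div_assoc', div_mul_eq_mul_div] using inner_sum_smul_le_of_le_inner_sub hw hcut
  · simpa only [div_mul_eq_mul_div] using
      sum_div_pos_of_sum_pos (fun i hi => mul_nonneg (hw i hi) (sq_nonneg _)) hL hpos

/-- the halfspace `H = {z : ⟨α, z⟩ ≤ β}` with
`α = ∑_{i∈J} w_i ∇f_i(x)` and `β = ⟨α, x⟩ − ∑_{i∈J} (w_i/L_i)‖∇f_i(x)‖²`
contains `C = ⋂ C_i`; and if `∑_{i∈J} w_i ‖∇f_i(x)‖² > 0` then `⟨α, x⟩ > β`, i.e. `x ∉ H`. -/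
theorem stmt4 {n m : ℕ} (f : Fin m → EuclideanSpace ℝ (Fin n) → ℝ)
    (C : Fin m → Set (EuclideanSpace ℝ (Fin n)))
    (L : Fin m → ℝ) (hL : ∀ i, 0 < L i)
    (hfconv : ∀ i, ConvexOn ℝ Set.univ (f i))
    (f' : Fin m → EuclideanSpace ℝ (Fin n) → EuclideanSpace ℝ (Fin n))
    (hdiff : ∀ i z, HasGradientAt (f i) (f' i z) z)
    (hlip : ∀ i z w, ‖f' i z - f' i w‖ ≤ L i * ‖z - w‖)
    (hnonneg : ∀ i z, 0 ≤ f i z)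
    (hzero : ∀ i z, f i z = 0 ↔ z ∈ C i)
    (hCne : (⋂ i, C i).Nonempty)
    (x : EuclideanSpace ℝ (Fin n)) (J : Finset (Fin m)) (w : Fin m → ℝ)
    (hw : ∀ i ∈ J, 0 < w i) (hwsum : ∑ i ∈ J, w i = 1) :
    (∀ z ∈ ⋂ i, C i,
      ⟪∑ i ∈ J, w i • f' i x, z⟫ ≤
        ⟪∑ i ∈ J, w i • f' i x, x⟫ - ∑ i ∈ J, w i / L i * ‖f' i x‖ ^ 2) ∧
    ((0 < ∑ i ∈ J, w i * ‖f' i x‖ ^ 2) →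
      ⟪∑ i ∈ J, w i • f' i x, x⟫ - ∑ i ∈ J, w i / L i * ‖f' i x‖ ^ 2 <
        ⟪∑ i ∈ J, w i • f' i x, x⟫) := by
  obtain ⟨hsub, hcut⟩ := stmt4_general f C L f' x J w (fun i _ => hL i) (fun i _ => hfconv i)
    (fun i _ => hdiff i) (fun i _ => hlip i)
    (fun i _ z hz y _ => ((hzero i z).2 hz).trans_le (hnonneg i y)) (fun i hi => (hw i hi).le)
  exact ⟨fun z hz => hsub z (Set.iInter_subset_iInter₂ (· ∈ J) C hz), hcut⟩
end
end

section
/- Let ψ : ℝ^n → ℝ be μ-strongly convex (μ > 0) and f_1, …, f_m : ℝ^n → ℝ convex and differentiable with L_i-Lipschitz gradients; L_max = max_i L_i. Let {x_k}_{k≥0} ⊆ ℝ^n be any sequence, J_k ⊆ {1,…,m} subsets, w_{i,k} > 0 with ∑_{i∈J_k} w_{i,k} = 1, and l_{J_k}* ∈ ℝ with l_{J_k}* ≤ inf_{x∈ℝ^n} ∑_{i∈J_k} w_{i,k} f_i(x). Let {λ_k}_{k≥0} be a nonincreasing positive sequence, λ_{-1} = λ_0, t_{-1} = γ_b > 0,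 and let t_k be given by the DecmSPS rule t_k = λ_k · min{ μ·(∑_{i∈J_k} w_{i,k}(f_i(x_k) − l_{J_k}*)) / ‖∑_{i∈J_k} w_{i,k}∇f_i(x_k)‖² , t_{k−1}/λ_{k−1} } (the first argument of the min being +∞ when ∑_{i∈J_k} w_{i,k}∇f_i(x_k) = 0). Then t_{k+1} ≤ t_k for all k ≥ 0, and λ_k·L̃ ≤ t_k ≤ (γ_b/λ_0)·λ_k for all k ≥ 0, where L̃ = min{ μ/(2 L_max), γ_b/λ_0 }. -/
/-!
A convex combination `F` of functions with `K`-Lipschitz gradients again has a `K`-Lipschitz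
gradient, so one gradient step of length `K⁻¹` from `x` decreases `F` by at least
`‖∇F x‖² / (2K)`. Since `F` stays above `l`, the Polyak quotient `μ (F x - l) / ‖∇F x‖²` is at
least `μ / (2K)`.

Hence the normalised steps `r_k = t_k / λ_k` satisfy `min (μ / (2K)) r_{k-1} ≤ r_k ≤ r_{k-1}` with
`r_{-1} = γ_b / λ_0`, which confines every `r_k` between `min (μ / (2K)) (γ_b / λ_0)` and
`γ_b / λ_0`. Finally `t_k = λ_k r_k` is nonincreasing because both factors are, and are nonnegative.
-/

open MeasureTheory ProbabilityTheory RealInnerProductSpace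
open scoped BigOperators

noncomputable section

section LipschitzGradient

variable {E : Type*} [NormedAddCommGroup E] [InnerProductSpace ℝ E] {K : ℝ} {x : E}

lemma inner_add_smul_le_of_lipschitz {g : E → E} (hK : ∀ z, ‖g z - g x‖ ≤ K * ‖z - x‖)
    (d : E) {s : ℝ} (hs : 0 ≤ s) :
    ⟪g (x + s • d), d⟫ ≤ ⟪g x, d⟫ + K * ‖d‖ ^ 2 * s := by
  have hdiff : ⟪g (x + s • d) - g x, d⟫ ≤ K * ‖d‖ ^ 2 * s :=
    calc ⟪g (x + s • d) - g x, d⟫ ≤ ‖g (x + s • d) - g x‖ * ‖d‖ := real_inner_le_norm _ _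
      _ ≤ K * ‖x + s • d - x‖ * ‖d‖ := by gcongr; exact hK _
      _ = K * ‖d‖ ^ 2 * s := by
        rw [add_sub_cancel_left, norm_smul, Real.norm_of_nonneg hs]
        ring
  rw [inner_sub_left] at hdiff
  linarith

lemma norm_weighted_sum_sub_le {ι : Type*} {g : ι → E → E} {J : Finset ι} {z : E}
    (hK : ∀ i ∈ J, ‖g i z - g i x‖ ≤ K * ‖z - x‖) {w : ι → ℝ} (hw : ∀ i ∈ J, 0 ≤ w i)
    (hwsum : ∑ i ∈ J, w i = 1) :
    ‖∑ i ∈ J, w i • g i z - ∑ i ∈ J, w i • g i x‖ ≤ K * ‖z - x‖ :=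
  calc ‖∑ i ∈ J, w i • g i z - ∑ i ∈ J, w i • g i x‖
      = ‖∑ i ∈ J, w i • (g i z - g i x)‖ := by simp only [smul_sub, Finset.sum_sub_distrib]
    _ ≤ ∑ i ∈ J, w i * (K * ‖z - x‖) := norm_sum_le_of_le _ fun i hi => by
        rw [norm_smul, Real.norm_of_nonneg (hw i hi)]
        exact mul_le_mul_of_nonneg_left (hK i hi) (hw i hi)
    _ = K * ‖z - x‖ := by rw [← Finset.sum_mul, hwsum, one_mul]

variable [CompleteSpace E]

lemma hasDerivAt_comp_add_smul_of_hasGradientAt {f : E → ℝ} {v d : E} {s : ℝ}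
    (hf : HasGradientAt f v (x + s • d)) : HasDerivAt (fun s : ℝ => f (x + s • d)) ⟪v, d⟫ s := by
  have hline : HasDerivAt (fun s : ℝ => x + s • d) d s := by
    simpa using ((hasDerivAt_id s).smul_const d).const_add x
  exact (hf.hasFDerivAt.comp_hasDerivAt s hline).congr_deriv (by simp)

lemma hasGradientAt_weighted_sum {ι : Type*} {f : ι → E → ℝ} {v : ι → E} {J : Finset ι}
    (hf : ∀ i ∈ J, HasGradientAt (f i) (v i) x) (w : ι → ℝ) :
    HasGradientAt (fun z => ∑ i ∈ J, w i * f i z) (∑ i ∈ J, w i • v i) x := by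
  rw [hasGradientAt_iff_hasFDerivAt, map_sum]
  simp only [map_smul]
  exact HasFDerivAt.fun_sum fun i hi => (hf i hi).hasFDerivAt.const_mul (w i)

lemma le_add_inner_add_of_lipschitz_gradient {f : E → ℝ} {f' : E → E}
    (hf : ∀ z, HasGradientAt f (f' z) z) (hK : ∀ z, ‖f' z - f' x‖ ≤ K * ‖z - x‖) (d : E) :
    f (x + d) ≤ f x + ⟪f' x, d⟫ + K / 2 * ‖d‖ ^ 2 := by
  -- Along the segment, `f` and the quadratic agree at `s = 0` and the quadratic grows faster.
  have hline (s : ℝ) : HasDerivAt (fun s : ℝ => f (x + s • d)) ⟪f' (x + s • d), d⟫ s :=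
    hasDerivAt_comp_add_smul_of_hasGradientAt (hf _)
  have hquad (s : ℝ) : HasDerivAt
      (fun s : ℝ => f x + s * ⟪f' x, d⟫ + K / 2 * ‖d‖ ^ 2 * s ^ 2)
      (⟪f' x, d⟫ + K * ‖d‖ ^ 2 * s) s := by
    refine ((((hasDerivAt_id s).mul_const ⟪f' x, d⟫).const_add (f x)).add
      (((hasDerivAt_id s).pow 2).const_mul (K / 2 * ‖d‖ ^ 2))).congr_deriv ?_
    simp only [id]
    push_cast
    ring
  have hle := image_le_of_deriv_right_le_deriv_boundary (a := 0) (b := 1)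
    (fun s _ => (hline s).continuousAt.continuousWithinAt)
    (fun s _ => (hline s).hasDerivWithinAt) (by simp)
    (fun s _ => (hquad s).continuousAt.continuousWithinAt)
    (fun s _ => (hquad s).hasDerivWithinAt)
    (fun s hs => inner_add_smul_le_of_lipschitz hK d hs.1) (Set.right_mem_Icc.2 zero_le_one)
  simpa using hle

lemma norm_gradient_sq_le_of_lipschitz_gradient {f : E → ℝ} {f' : E → E}
    (hf : ∀ z, HasGradientAt f (f' z) z) (hK : ∀ z, ‖f' z - f' x‖ ≤ K * ‖z - x‖) (hKpos : 0 < K)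
    {l : ℝ} (hl : ∀ y, l ≤ f y) : ‖f' x‖ ^ 2 ≤ 2 * K * (f x - l) := by
  have hdecrease : l ≤ f x - ‖f' x‖ ^ 2 / (2 * K) :=
    calc l ≤ f (x + -(K⁻¹ • f' x)) := hl _
      _ ≤ f x + ⟪f' x, -(K⁻¹ • f' x)⟫ + K / 2 * ‖-(K⁻¹ • f' x)‖ ^ 2 :=
        le_add_inner_add_of_lipschitz_gradient hf hK _
      _ = f x - ‖f' x‖ ^ 2 / (2 * K) := by
        rw [inner_neg_right, real_inner_smul_right, real_inner_self_eq_norm_sq, norm_neg,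
          norm_smul, Real.norm_of_nonneg (inv_nonneg.2 hKpos.le)]
        field_simp
        ring
  rw [← div_le_iff₀' (by positivity)]
  linarith

lemma norm_weighted_sum_gradient_sq_le {ι : Type*} {f : ι → E → ℝ} {f' : ι → E → E}
    {J : Finset ι} (hf : ∀ i ∈ J, ∀ z, HasGradientAt (f i) (f' i z) z)
    (hK : ∀ i ∈ J, ∀ z, ‖f' i z - f' i x‖ ≤ K * ‖z - x‖) (hKpos : 0 < K) {w : ι → ℝ}
    (hw : ∀ i ∈ J, 0 ≤ w i) (hwsum : ∑ i ∈ J, w i = 1) {l : ℝ}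
    (hl : ∀ y, l ≤ ∑ i ∈ J, w i * f i y) :
    ‖∑ i ∈ J, w i • f' i x‖ ^ 2 ≤ 2 * K * ∑ i ∈ J, w i * (f i x - l) := by
  have hgap : ∑ i ∈ J, w i * (f i x - l) = ∑ i ∈ J, w i * f i x - l := by
    simp only [mul_sub, Finset.sum_sub_distrib]
    rw [← Finset.sum_mul, hwsum, one_mul]
  rw [hgap]
  exact norm_gradient_sq_le_of_lipschitz_gradient
    (fun z => hasGradientAt_weighted_sum (fun i hi => hf i hi z) w)
    (fun z => norm_weighted_sum_sub_le (fun i hi => hK i hi z) hw hwsum) hKpos hl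

end LipschitzGradient

section StepSizes

/-- One step of the DecmSPS rule, producing the step size `s` from the scale `lam`, the optimality
gap `gap`, the gradient `g` and the previous ratio `r = t_{k-1} / λ_{k-1}`. The Polyak quotient
`μ * gap / ‖g‖ ^ 2` counts as `+∞` when `g = 0`, which leaves `r` as the minimum. -/
structure IsDecmSPSStep {E : Type*} [NormedAddCommGroup E] (μ lam gap : ℝ) (g : E) (r s : ℝ) :
    Prop where
  of_eq_zero : g = 0 → s = lam * r
  of_ne_zero : g ≠ 0 → s = lam * min (μ * gap / ‖g‖ ^ 2) r

/-- `t` is the sequence of DecmSPS step sizes with scales `lam`, optimality gaps `gap`, gradients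
`g` and initial cap `γb`. The conventions `t_{-1} = γ_b` and `λ_{-1} = λ_0` become the initial ratio
`γb / lam 0`. -/
structure IsDecmSPS {E : Type*} [NormedAddCommGroup E] (μ γb : ℝ) (lam gap : ℕ → ℝ) (g : ℕ → E)
    (t : ℕ → ℝ) : Prop where
  zero : IsDecmSPSStep μ (lam 0) (gap 0) (g 0) (γb / lam 0) (t 0)
  succ : ∀ k, IsDecmSPSStep μ (lam (k + 1)) (gap (k + 1)) (g (k + 1)) (t k / lam k) (t (k + 1))

variable {E : Type*} [NormedAddCommGroup E] {μ K : ℝ}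

lemma IsDecmSPSStep.le_mul {lam gap r s : ℝ} {g : E} (h : IsDecmSPSStep μ lam gap g r s)
    (hlam : 0 ≤ lam) : s ≤ lam * r := by
  by_cases hg : g = 0
  · exact (h.of_eq_zero hg).le
  · rw [h.of_ne_zero hg]
    exact mul_le_mul_of_nonneg_left (min_le_right _ _) hlam

lemma IsDecmSPSStep.mul_min_le {lam gap r s : ℝ} {g : E} (h : IsDecmSPSStep μ lam gap g r s)
    (hlam : 0 ≤ lam) (hμ : 0 ≤ μ) (hK : 0 < K) (hgap : ‖g‖ ^ 2 ≤ 2 * K * gap) :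
    lam * min (μ / (2 * K)) r ≤ s := by
  by_cases hg : g = 0
  · rw [h.of_eq_zero hg]
    exact mul_le_mul_of_nonneg_left (min_le_right _ _) hlam
  · have hquot : μ / (2 * K) ≤ μ * gap / ‖g‖ ^ 2 := by
      rw [div_le_div_iff₀ (by positivity) (by positivity)]
      calc μ * ‖g‖ ^ 2 ≤ μ * (2 * K * gap) := mul_le_mul_of_nonneg_left hgap hμ
        _ = μ * gap * (2 * K) := by ring
    rw [h.of_ne_zero hg]
    exact mul_le_mul_of_nonneg_left (min_le_min_right r hquot) hlam

namespace IsDecmSPS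

variable {γb : ℝ} {lam gap t : ℕ → ℝ} {g : ℕ → E}

lemma le_div_mul (h : IsDecmSPS μ γb lam gap g t) (hlam : ∀ k, 0 < lam k) (k : ℕ) :
    t k ≤ γb / lam 0 * lam k := by
  induction k with
  | zero => exact (h.zero.le_mul (hlam 0).le).trans_eq (mul_comm _ _)
  | succ k ih =>
    calc t (k + 1) ≤ lam (k + 1) * (t k / lam k) := (h.succ k).le_mul (hlam _).le
      _ ≤ lam (k + 1) * (γb / lam 0) :=
        mul_le_mul_of_nonneg_left ((div_le_iff₀ (hlam k)).2 ih) (hlam _).le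
      _ = γb / lam 0 * lam (k + 1) := mul_comm _ _

lemma mul_min_le (h : IsDecmSPS μ γb lam gap g t) (hlam : ∀ k, 0 < lam k) (hμ : 0 ≤ μ)
    (hK : 0 < K) (hgap : ∀ k, ‖g k‖ ^ 2 ≤ 2 * K * gap k) (k : ℕ) :
    lam k * min (μ / (2 * K)) (γb / lam 0) ≤ t k := by
  induction k with
  | zero => exact h.zero.mul_min_le (hlam 0).le hμ hK (hgap 0)
  | succ k ih =>
    calc lam (k + 1) * min (μ / (2 * K)) (γb / lam 0)
        ≤ lam (k + 1) * min (μ / (2 * K)) (t k / lam k) :=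
          mul_le_mul_of_nonneg_left
            (le_min (min_le_left _ _) ((le_div_iff₀' (hlam k)).2 ih)) (hlam _).le
      _ ≤ t (k + 1) := (h.succ k).mul_min_le (hlam _).le hμ hK (hgap _)

lemma succ_le (h : IsDecmSPS μ γb lam gap g t) (hlam : ∀ k, 0 < lam k) {k : ℕ}
    (hlam_le : lam (k + 1) ≤ lam k) (ht : 0 ≤ t k) : t (k + 1) ≤ t k :=
  calc t (k + 1) ≤ lam (k + 1) * (t k / lam k) := (h.succ k).le_mul (hlam _).le
    _ ≤ lam k * (t k / lam k) := mul_le_mul_of_nonneg_right hlam_le (div_nonneg ht (hlam k).le)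
    _ = t k := mul_div_cancel₀ _ (hlam k).ne'

end IsDecmSPS

end StepSizes

theorem stmt5_general {ι E : Type*} [NormedAddCommGroup E] [InnerProductSpace ℝ E]
    [CompleteSpace E] {μ : ℝ} (hμ : 0 ≤ μ)
    {f : ι → E → ℝ} {f' : ι → E → E} (hf : ∀ i z, HasGradientAt (f i) (f' i z) z)
    {L : ι → ℝ} (hlip : ∀ i z w, ‖f' i z - f' i w‖ ≤ L i * ‖z - w‖)
    {Lmax : ℝ} (hLmax : ∀ i, L i ≤ Lmax) (hLmax_pos : 0 < Lmax)
    {x : ℕ → E} {J : ℕ → Finset ι} {w : ℕ → ι → ℝ}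
    (hw : ∀ k, ∀ i ∈ J k, 0 ≤ w k i) (hwsum : ∀ k, ∑ i ∈ J k, w k i = 1)
    {l : ℕ → ℝ} (hl : ∀ k y, l k ≤ ∑ i ∈ J k, w k i * f i y)
    {lam : ℕ → ℝ} (hlam : ∀ k, 0 < lam k) (hlam_le : ∀ k, lam (k + 1) ≤ lam k)
    {γb : ℝ} (hγb : 0 ≤ γb) {t : ℕ → ℝ}
    (ht : IsDecmSPS μ γb lam (fun k => ∑ i ∈ J k, w k i * (f i (x k) - l k))
      (fun k => ∑ i ∈ J k, w k i • f' i (x k)) t) (k : ℕ) :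
    t (k + 1) ≤ t k ∧
      lam k * min (μ / (2 * Lmax)) (γb / lam 0) ≤ t k ∧
      t k ≤ γb / lam 0 * lam k := by
  have hlip_max (i : ι) (z y : E) : ‖f' i z - f' i y‖ ≤ Lmax * ‖z - y‖ :=
    (hlip i z y).trans (mul_le_mul_of_nonneg_right (hLmax i) (norm_nonneg _))
  have hlower : lam k * min (μ / (2 * Lmax)) (γb / lam 0) ≤ t k :=
    ht.mul_min_le hlam hμ hLmax_pos (fun j =>
      norm_weighted_sum_gradient_sq_le (fun i _ => hf i) (fun i _ z => hlip_max i z (x j))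
        hLmax_pos (hw j) (hwsum j) (hl j)) k
  have hmin : 0 ≤ min (μ / (2 * Lmax)) (γb / lam 0) :=
    le_min (by positivity) (div_nonneg hγb (hlam 0).le)
  have ht_nonneg : 0 ≤ t k := (mul_nonneg (hlam k).le hmin).trans hlower
  exact ⟨ht.succ_le hlam (hlam_le k) ht_nonneg, hlower, ht.le_div_mul hlam k⟩

/-- Lemma on DecmSPS: the DecmSPS stepsizes are nonincreasing and satisfy
`λ_k·L̃ ≤ t_k ≤ (γ_b/λ_0)·λ_k`, where `L̃ = min{μ/(2 L_max), γ_b/λ_0}`. -/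
theorem stmt5 {n m : ℕ} (hm : 0 < m)
    (ψ : EuclideanSpace ℝ (Fin n) → ℝ) (μ : ℝ) (hμ : 0 < μ)
    (hψconv : ConvexOn ℝ Set.univ ψ) (hsc : SubgradStrongConvex ψ μ)
    (f : Fin m → EuclideanSpace ℝ (Fin n) → ℝ)
    (hfconv : ∀ i, ConvexOn ℝ Set.univ (f i))
    (f' : Fin m → EuclideanSpace ℝ (Fin n) → EuclideanSpace ℝ (Fin n))
    (hdiff : ∀ i z, HasGradientAt (f i) (f' i z) z)
    (L : Fin m → ℝ) (hL : ∀ i, 0 < L i)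
    (hlip : ∀ i z w, ‖f' i z - f' i w‖ ≤ L i * ‖z - w‖)
    (Lmax : ℝ) (hLmax : Lmax = ⨆ i, L i)
    (x : ℕ → EuclideanSpace ℝ (Fin n))
    (J : ℕ → Finset (Fin m)) (w : ℕ → Fin m → ℝ)
    (hw : ∀ k, ∀ i ∈ J k, 0 < w k i) (hwsum : ∀ k, ∑ i ∈ J k, w k i = 1)
    (l : ℕ → ℝ) (hl : ∀ k y, l k ≤ ∑ i ∈ J k, w k i * f i y)
    (lam : ℕ → ℝ) (hlampos : ∀ k, 0 < lam k) (hlammono : ∀ k, lam (k + 1) ≤ lam k)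
    (γb : ℝ) (hγb : 0 < γb)
    (t : ℕ → ℝ)
    (ht0a : ∑ i ∈ J 0, w 0 i • f' i (x 0) = 0 → t 0 = lam 0 * (γb / lam 0))
    (ht0b : ∑ i ∈ J 0, w 0 i • f' i (x 0) ≠ 0 →
      t 0 = lam 0 * min
        (μ * (∑ i ∈ J 0, w 0 i * (f i (x 0) - l 0)) / ‖∑ i ∈ J 0, w 0 i • f' i (x 0)‖ ^ 2)
        (γb / lam 0))
    (hta : ∀ k, ∑ i ∈ J (k + 1), w (k + 1) i • f' i (x (k + 1)) = 0 →
      t (k + 1) = lam (k + 1) * (t k / lam k))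
    (htb : ∀ k, ∑ i ∈ J (k + 1), w (k + 1) i • f' i (x (k + 1)) ≠ 0 →
      t (k + 1) = lam (k + 1) * min
        (μ * (∑ i ∈ J (k + 1), w (k + 1) i * (f i (x (k + 1)) - l (k + 1))) /
          ‖∑ i ∈ J (k + 1), w (k + 1) i • f' i (x (k + 1))‖ ^ 2)
        (t k / lam k)) :
    ∀ k, t (k + 1) ≤ t k ∧
      lam k * min (μ / (2 * Lmax)) (γb / lam 0) ≤ t k ∧
      t k ≤ γb / lam 0 * lam k := by
  have hle (i : Fin m) : L i ≤ Lmax := hLmax ▸ le_ciSup (Set.finite_range L).bddAbove i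
  exact stmt5_general hμ.le hdiff hlip hle ((hL ⟨0, hm⟩).trans_le (hle _))
    (fun k i hi => (hw k i hi).le) hwsum hl hlampos hlammono hγb.le
    ⟨⟨ht0a, ht0b⟩, fun k => ⟨hta k, htb k⟩⟩
end
end

section
/- Let ψ : ℝ^n → ℝ be μ-strongly convex (μ > 0) and f_1, …, f_m : ℝ^n → ℝ convex and differentiable with L_i-Lipschitz gradients, nonnegative, with f_i(x) = 0 if and only if x ∈ C_i, and C = ∩_{i=1}^m C_i nonempty; L_max = max_i L_i. Fix x ∈ ℝ^n, x* ∈ ∂ψ(x), a subset J ⊆ {1,…,m}, weights w_i > 0 with ∑_{i∈J} w_i = 1, and suppose g := ∑_{i∈J} w_i ∇f_i(x) ≠ 0. Set β = ⟨g, x⟩ − ∑_{i∈J}(w_i/L_i)‖∇f_i(x)‖², H = {z : ⟨g, z⟩ ≤ β}, and L_adapt = ‖g‖² / ∑_{i∈J} w_i‖∇f_i(x)‖². If t̃ ∈ (0, μ/(L_max·L_adapt)] and the point x̃ = ∇ψ*(x* − t̃·g) satisfies ⟨g, x̃⟩ = β, then x̃ is the Bregman projection of x onto H with respect to ψ and x*,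 i.e., x̃ = Π_H^{x*}(x). -/
/-!
The step `x̃ = ∇ψ*(p)` with `p = xs - t̃ g` satisfies `p ∈ ∂ψ(x̃)`, so for every `y` in the
halfspace
`D(x, y) - D(x, x̃) ≥ ⟨p - xs, y - x̃⟩ = -t̃ (⟨g, y⟩ - β) ≥ 0`,
because `⟨g, x̃⟩ = β` and `t̃ ≥ 0`.

To see that `p ∈ ∂ψ(x̃)`: the function `ψ - ⟨p, ·⟩` grows quadratically and hence has a minimizer
`z`, that is, `p ∈ ∂ψ(z)`. Strong convexity at `z` yields
`0 ≤ ψ*(q) - ψ*(p) - ⟨z, q - p⟩ ≤ ‖q - p‖² / (2μ)` for all `q`, so `∇ψ*(p) = z`.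
-/

open MeasureTheory ProbabilityTheory RealInnerProductSpace
open scoped BigOperators

noncomputable section

section General

theorem exists_forall_le_of_lowerSemicontinuous {X α : Type*} [TopologicalSpace X] [LinearOrder α]
    {f : X → α} (hf : LowerSemicontinuous f) {K : Set X} (hK : IsCompact K) (x : X)
    (hle : ∀ y ∉ K, f x ≤ f y) : ∃ z, ∀ y, f z ≤ f y := by
  obtain ⟨z, -, hz⟩ := (hf.lowerSemicontinuousOn (insert x K)).exists_isMinOn
    (Set.insert_nonempty x K) (hK.insert x)
  rw [isMinOn_iff] at hz
  refine ⟨z, fun y => ?_⟩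
  by_cases hy : y ∈ K
  · exact hz y (Set.mem_insert_of_mem x hy)
  · exact (hz x (Set.mem_insert x K)).trans (hle y hy)

theorem real_inner_le_add_mul_norm_sq {E : Type*} [SeminormedAddCommGroup E]
    [InnerProductSpace ℝ E] {ε : ℝ} (hε : 0 < ε) (a b : E) :
    ⟪a, b⟫ ≤ (2 * ε)⁻¹ * ‖a‖ ^ 2 + ε / 2 * ‖b‖ ^ 2 := by
  have young : 2 * ‖b‖ * ‖a‖ ≤ ε * ‖b‖ ^ 2 + ε⁻¹ * ‖a‖ ^ 2 := two_mul_le_add_mul_sq hε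
  have cauchy_schwarz := real_inner_le_norm a b
  rw [mul_inv]
  linarith

theorem hasGradientAt_of_abs_sub_sub_inner_le {E : Type*} [NormedAddCommGroup E]
    [InnerProductSpace ℝ E] [CompleteSpace E] {f : E → ℝ} {f' x : E} {c : ℝ}
    (h : ∀ y, |f y - f x - ⟪f', y - x⟫| ≤ c * ‖y - x‖ ^ 2) : HasGradientAt f f' x := by
  have hO : (fun y => f y - f x - ⟪f', y - x⟫) =O[nhds x] fun y => ‖y - x‖ ^ 2 :=
    Asymptotics.IsBigO.of_bound c <| .of_forall fun y => by
      simpa only [Real.norm_eq_abs, abs_pow, abs_norm] using h y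
  exact hasGradientAt_iff_isLittleO.mpr
    (hO.trans_isLittleO (Asymptotics.isLittleO_pow_sub_sub x one_lt_two))

end General

section Bregman

variable {n : ℕ} {ψ : EuclideanSpace ℝ (Fin n) → ℝ} {μ β t : ℝ}
  {x xs z p g : EuclideanSpace ℝ (Fin n)} {C : Set (EuclideanSpace ℝ (Fin n))}

theorem isSubgrad_iff_forall_inner_sub_le :
    IsSubgrad ψ z p ↔ ∀ y, ⟪p, y⟫ - ψ y ≤ ⟪p, z⟫ - ψ z :=
  forall_congr' fun y => by
    rw [inner_sub_right]
    constructor <;> intro h <;> linarith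

theorem SubgradStrongConvex.inner_sub_le_inner_sub_of_le_norm_sub (hψ : SubgradStrongConvex ψ μ)
    (hμ : 0 < μ) (hxs : IsSubgrad ψ x xs) {y : EuclideanSpace ℝ (Fin n)}
    (hy : 2 * ‖xs - p‖ / μ ≤ ‖y - x‖) : ⟪p, y⟫ - ψ y ≤ ⟪p, x⟫ - ψ x := by
  have growth := hψ x y xs hxs
  have linear : -⟪xs - p, y - x⟫ ≤ μ / 2 * ‖y - x‖ ^ 2 :=
    calc -⟪xs - p, y - x⟫ ≤ ‖xs - p‖ * ‖y - x‖ :=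
          neg_le.mp (neg_le_of_abs_le (abs_real_inner_le_norm _ _))
      _ ≤ μ / 2 * ‖y - x‖ * ‖y - x‖ := by
          rw [div_le_iff₀ hμ] at hy
          gcongr
          linarith
      _ = μ / 2 * ‖y - x‖ ^ 2 := by ring
  rw [inner_sub_left, inner_sub_right p] at linear
  linarith

theorem SubgradStrongConvex.exists_isSubgrad (hψ : SubgradStrongConvex ψ μ) (hμ : 0 < μ)
    (hlsc : LowerSemicontinuous ψ) (hxs : IsSubgrad ψ x xs) (p : EuclideanSpace ℝ (Fin n)) :
    ∃ z, IsSubgrad ψ z p := by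
  have hlin : Continuous fun y => -⟪p, y⟫ := by fun_prop
  obtain ⟨z, hz⟩ := exists_forall_le_of_lowerSemicontinuous (hlsc.add hlin.lowerSemicontinuous)
    (isCompact_closedBall x (2 * ‖xs - p‖ / μ)) x fun y hy => by
      rw [Metric.mem_closedBall, dist_eq_norm, not_le] at hy
      linarith [hψ.inner_sub_le_inner_sub_of_le_norm_sub hμ hxs hy.le]
  exact ⟨z, isSubgrad_iff_forall_inner_sub_le.mpr fun y => by linarith [hz y]⟩

theorem inner_sub_le_fenchel_of_forall_le {c : ℝ} (h : ∀ y, ⟪p, y⟫ - ψ y ≤ c)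
    (z : EuclideanSpace ℝ (Fin n)) : ⟪p, z⟫ - ψ z ≤ fenchel ψ p :=
  le_ciSup (f := fun y => ⟪p, y⟫ - ψ y) ⟨c, Set.forall_mem_range.mpr h⟩ z

theorem IsSubgrad.fenchel_eq (hp : IsSubgrad ψ z p) : fenchel ψ p = ⟪p, z⟫ - ψ z := by
  have hle := isSubgrad_iff_forall_inner_sub_le.mp hp
  exact le_antisymm (ciSup_le hle) (inner_sub_le_fenchel_of_forall_le hle z)

theorem SubgradStrongConvex.inner_sub_le_add_norm_sub_sq (hψ : SubgradStrongConvex ψ μ)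
    (hμ : 0 < μ) (hp : IsSubgrad ψ z p) (q y : EuclideanSpace ℝ (Fin n)) :
    ⟪q, y⟫ - ψ y ≤ ⟪q, z⟫ - ψ z + (2 * μ)⁻¹ * ‖q - p‖ ^ 2 := by
  have growth := hψ z y p hp
  have young := real_inner_le_add_mul_norm_sq hμ (q - p) (y - z)
  rw [inner_sub_left, inner_sub_right q] at young
  linarith

theorem SubgradStrongConvex.hasGradientAt_fenchel (hψ : SubgradStrongConvex ψ μ) (hμ : 0 < μ)
    (hp : IsSubgrad ψ z p) : HasGradientAt (fenchel ψ) z p := by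
  refine hasGradientAt_of_abs_sub_sub_inner_le (c := (2 * μ)⁻¹) fun q => ?_
  have hle := hψ.inner_sub_le_add_norm_sub_sq hμ hp q
  have upper : fenchel ψ q ≤ ⟪q, z⟫ - ψ z + (2 * μ)⁻¹ * ‖q - p‖ ^ 2 := ciSup_le hle
  have lower : ⟪q, z⟫ - ψ z ≤ fenchel ψ q := inner_sub_le_fenchel_of_forall_le hle z
  rw [hp.fenchel_eq, inner_sub_right, real_inner_comm q z, real_inner_comm p z,
    abs_of_nonneg (by linarith)]
  linarith

theorem SubgradStrongConvex.isSubgrad_gradient_fenchel (hψ : SubgradStrongConvex ψ μ)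
    (hμ : 0 < μ) (hlsc : LowerSemicontinuous ψ) (hxs : IsSubgrad ψ x xs)
    (p : EuclideanSpace ℝ (Fin n)) : IsSubgrad ψ (gradient (fenchel ψ) p) p := by
  obtain ⟨z, hz⟩ := hψ.exists_isSubgrad hμ hlsc hxs p
  rwa [(hψ.hasGradientAt_fenchel hμ hz).gradient]

theorem IsSubgrad.inner_sub_le_breg_sub_breg (hp : IsSubgrad ψ z p)
    (x xs y : EuclideanSpace ℝ (Fin n)) :
    ⟪p - xs, y - z⟫ ≤ Breg ψ x xs y - Breg ψ x xs z := by
  have hy := hp y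
  simp only [Breg, inner_sub_left, inner_sub_right] at hy ⊢
  linarith

theorem IsSubgrad.isBregProj (hp : IsSubgrad ψ z p) (hz : z ∈ C)
    (hC : ∀ y ∈ C, 0 ≤ ⟪p - xs, y - z⟫) : IsBregProj ψ x xs C z :=
  ⟨hz, fun y hy => sub_nonneg.mp ((hC y hy).trans (hp.inner_sub_le_breg_sub_breg x xs y))⟩

theorem IsSubgrad.isBregProj_halfspace (hp : IsSubgrad ψ z (xs - t • g)) (ht : 0 ≤ t)
    (hz : ⟪g, z⟫ = β) : IsBregProj ψ x xs {y | ⟪g, y⟫ ≤ β} z := by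
  refine hp.isBregProj hz.le fun y (hy : ⟪g, y⟫ ≤ β) => ?_
  calc 0 ≤ t * (β - ⟪g, y⟫) := mul_nonneg ht (sub_nonneg.mpr hy)
    _ = ⟪xs - t • g - xs, y - z⟫ := by
      rw [sub_sub_cancel_left, inner_neg_left, real_inner_smul_left, inner_sub_right, hz]
      ring

theorem stmt6_general (hμ : 0 < μ) (hlsc : LowerSemicontinuous ψ) (hψ : SubgradStrongConvex ψ μ)
    (hxs : IsSubgrad ψ x xs) (ht : 0 ≤ t) (hon : ⟪g, gradient (fenchel ψ) (xs - t • g)⟫ = β) :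
    IsBregProj ψ x xs {y | ⟪g, y⟫ ≤ β} (gradient (fenchel ψ) (xs - t • g)) :=
  (hψ.isSubgrad_gradient_fenchel hμ hlsc hxs (xs - t • g)).isBregProj_halfspace ht hon

end Bregman

/-- Theorem on the inexact projective stepsize: if
`t̃ ∈ (0, μ/(L_max·L_adapt)]` and `x̃ = ∇ψ*(xs − t̃·g)` lies on the hyperplane
`⟨g, x̃⟩ = β`, then `x̃` is the Bregman projection of `x` onto the halfspace
`H = {z : ⟨g, z⟩ ≤ β}`. -/
theorem stmt6 {n m : ℕ} (ψ : EuclideanSpace ℝ (Fin n) → ℝ) (μ : ℝ) (hμ : 0 < μ)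
    (hψconv : ConvexOn ℝ Set.univ ψ) (hsc : SubgradStrongConvex ψ μ)
    (f : Fin m → EuclideanSpace ℝ (Fin n) → ℝ)
    (C : Fin m → Set (EuclideanSpace ℝ (Fin n)))
    (hfconv : ∀ i, ConvexOn ℝ Set.univ (f i))
    (f' : Fin m → EuclideanSpace ℝ (Fin n) → EuclideanSpace ℝ (Fin n))
    (hdiff : ∀ i z, HasGradientAt (f i) (f' i z) z)
    (L : Fin m → ℝ) (hL : ∀ i, 0 < L i)
    (hlip : ∀ i z w, ‖f' i z - f' i w‖ ≤ L i * ‖z - w‖)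
    (hnonneg : ∀ i z, 0 ≤ f i z)
    (hzero : ∀ i z, f i z = 0 ↔ z ∈ C i)
    (hCne : (⋂ i, C i).Nonempty)
    (Lmax : ℝ) (hm : 0 < m) (hLmax : Lmax = ⨆ i, L i)
    (x xs : EuclideanSpace ℝ (Fin n)) (hxs : IsSubgrad ψ x xs)
    (J : Finset (Fin m)) (w : Fin m → ℝ)
    (hw : ∀ i ∈ J, 0 < w i) (hwsum : ∑ i ∈ J, w i = 1)
    (hg : ∑ i ∈ J, w i • f' i x ≠ 0)
    (ttil : ℝ) (httilpos : 0 < ttil)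
    (httille : ttil ≤ μ /
      (Lmax * (‖∑ i ∈ J, w i • f' i x‖ ^ 2 / ∑ i ∈ J, w i * ‖f' i x‖ ^ 2)))
    (hon : ⟪∑ i ∈ J, w i • f' i x,
        gradient (fenchel ψ) (xs - ttil • ∑ i ∈ J, w i • f' i x)⟫ =
      ⟪∑ i ∈ J, w i • f' i x, x⟫ - ∑ i ∈ J, w i / L i * ‖f' i x‖ ^ 2) :
    IsBregProj ψ x xs
      {z | ⟪∑ i ∈ J, w i • f' i x, z⟫ ≤
        ⟪∑ i ∈ J, w i • f' i x, x⟫ - ∑ i ∈ J, w i / L i * ‖f' i x‖ ^ 2}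
      (gradient (fenchel ψ) (xs - ttil • ∑ i ∈ J, w i • f' i x)) :=
  stmt6_general hμ hψconv.locallyLipschitz.continuous.lowerSemicontinuous hsc hxs httilpos.le hon
end
end

section
/- Let ψ : ℝ^n → ℝ be μ-strongly convex (μ > 0) and f_1, …, f_m : ℝ^n → ℝ convex and differentiable with L_i-Lipschitz gradients; L_max = max_i L_i. Fix x ∈ ℝ^n, x* ∈ ∂ψ(x), a subset J ⊆ {1,…,m}, weights w_i > 0 with ∑_{i∈J} w_i = 1, and suppose ∑_{i∈J} w_i‖∇f_i(x)‖² > 0. Set α = ∑_{i∈J} w_i ∇f_i(x), β = ⟨α, x⟩ − ∑_{i∈J}(w_i/L_i)‖∇f_i(x)‖², H = {z : ⟨α, z⟩ ≤ β}, and L_adapt = ‖α‖² / ∑_{i∈J} w_i‖∇f_i(x)‖². For any stepsize t ∈ (0, 2μ/(L_max·L_adapt)), define x⁺* = x* − t·α and x⁺ = ∇ψ*(x⁺*). Then for every z ∈ H: D_ψ^{x⁺*}(x⁺, z) ≤ D_ψ^{x*}(x, z) − ( t/L_max − (t²/(2μ))·L_adapt )·∑_{i∈J} w_i‖∇f_i(x)‖².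 -/
/-!
Write `α = ∑ w_i ∇f_i(x)`, `v = t • α` and `p = xs - v`. The three-point expansion of the Bregman
distance turns the decrease `D^{xs}(x, z) - D^p(y, z)` into `D^{xs}(x, y) - ⟪v, z - y⟫`. Strong
convexity at `x` bounds `D^{xs}(x, y)` below by `(μ / 2) ‖y - x‖²`, which by Young's inequality
absorbs `⟪v, x - y⟫` at the cost of `‖v‖² / (2 μ)`. What remains is `t ⟪α, z - x⟫`, which the
halfspace bounds by `-(t / L_max) ∑ w_i ‖∇f_i(x)‖²`.

The estimate holds for every `y`, not only for `y = ∇ψ*(p)`: for fixed `p` and `z`, the latter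
maximizes `D^p(y, z)` over `y`, with maximum `ψ z + ψ* p - ⟪p, z⟫`.
-/

open MeasureTheory ProbabilityTheory RealInnerProductSpace
open scoped BigOperators

noncomputable section

lemma inner_le_norm_sq_div_add_mul_norm_sq {E : Type*} [SeminormedAddCommGroup E]
    [InnerProductSpace ℝ E] {μ : ℝ} (hμ : 0 < μ) (u v : E) :
    ⟪u, v⟫ ≤ ‖u‖ ^ 2 / (2 * μ) + μ / 2 * ‖v‖ ^ 2 := by
  have hsq : 0 ≤ (‖u‖ - μ * ‖v‖) ^ 2 / (2 * μ) := by positivity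
  calc ⟪u, v⟫ ≤ ‖u‖ * ‖v‖ := real_inner_le_norm u v
    _ ≤ ‖u‖ * ‖v‖ + (‖u‖ - μ * ‖v‖) ^ 2 / (2 * μ) := le_add_of_nonneg_right hsq
    _ = ‖u‖ ^ 2 / (2 * μ) + μ / 2 * ‖v‖ ^ 2 := by field_simp; ring

lemma sum_mul_div_le_sum_div_mul {ι K : Type*} [Field K] [LinearOrder K] [IsStrictOrderedRing K]
    {J : Finset ι} {w a L : ι → K} {M : K} (hw : ∀ i ∈ J, 0 ≤ w i) (ha : ∀ i ∈ J, 0 ≤ a i)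
    (hL : ∀ i ∈ J, 0 < L i) (hM : ∀ i ∈ J, L i ≤ M) :
    (∑ i ∈ J, w i * a i) / M ≤ ∑ i ∈ J, w i / L i * a i := by
  rw [Finset.sum_div]
  refine Finset.sum_le_sum fun i hi => ?_
  rw [mul_div_right_comm]
  exact mul_le_mul_of_nonneg_right (div_le_div_of_nonneg_left (hw i hi) (hL i hi) (hM i hi))
    (ha i hi)

section Bregman

variable {n : ℕ} {ψ : EuclideanSpace ℝ (Fin n) → ℝ} {μ : ℝ}

lemma SubgradStrongConvex.mul_norm_sq_le_breg (hψ : SubgradStrongConvex ψ μ)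
    {x xs : EuclideanSpace ℝ (Fin n)} (hxs : IsSubgrad ψ x xs) (y : EuclideanSpace ℝ (Fin n)) :
    μ / 2 * ‖y - x‖ ^ 2 ≤ Breg ψ x xs y := by
  have := hψ x y xs hxs
  unfold Breg
  linarith

lemma breg_eq_breg_sub_breg_add_inner (ψ : EuclideanSpace ℝ (Fin n) → ℝ)
    (x xs y ys z : EuclideanSpace ℝ (Fin n)) :
    Breg ψ y ys z = Breg ψ x xs z - Breg ψ x xs y + ⟪xs - ys, z - y⟫ := by
  simp only [Breg, inner_sub_left, inner_sub_right]
  ring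

lemma breg_sub_le_breg_add_inner_add (hμ : 0 < μ) {x xs y : EuclideanSpace ℝ (Fin n)}
    (hy : μ / 2 * ‖y - x‖ ^ 2 ≤ Breg ψ x xs y) (v z : EuclideanSpace ℝ (Fin n)) :
    Breg ψ y (xs - v) z ≤ Breg ψ x xs z + ⟪v, z - x⟫ + ‖v‖ ^ 2 / (2 * μ) := by
  have hyoung : ⟪v, x - y⟫ ≤ ‖v‖ ^ 2 / (2 * μ) + μ / 2 * ‖y - x‖ ^ 2 := by
    rw [norm_sub_rev y x]
    exact inner_le_norm_sq_div_add_mul_norm_sq hμ v (x - y)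
  calc Breg ψ y (xs - v) z = Breg ψ x xs z - Breg ψ x xs y + ⟪v, z - y⟫ := by
        rw [breg_eq_breg_sub_breg_add_inner ψ x xs, sub_sub_cancel]
    _ = Breg ψ x xs z - Breg ψ x xs y + (⟪v, z - x⟫ + ⟪v, x - y⟫) := by
        rw [← inner_add_right, sub_add_sub_cancel]
    _ ≤ Breg ψ x xs z + ⟪v, z - x⟫ + ‖v‖ ^ 2 / (2 * μ) := by linarith

end Bregman

theorem stmt8_general {n : ℕ} {ι : Type*} {ψ : EuclideanSpace ℝ (Fin n) → ℝ} {μ : ℝ} (hμ : 0 < μ)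
    {x xs y z : EuclideanSpace ℝ (Fin n)} (hy : μ / 2 * ‖y - x‖ ^ 2 ≤ Breg ψ x xs y)
    {J : Finset ι} {w L : ι → ℝ} {g : ι → EuclideanSpace ℝ (Fin n)} {Lmax t : ℝ}
    (hw : ∀ i ∈ J, 0 ≤ w i) (hL : ∀ i ∈ J, 0 < L i) (hLmax : ∀ i ∈ J, L i ≤ Lmax)
    (hpos : 0 < ∑ i ∈ J, w i * ‖g i‖ ^ 2) (ht : 0 ≤ t)
    (hz : ⟪∑ i ∈ J, w i • g i, z⟫ ≤
      ⟪∑ i ∈ J, w i • g i, x⟫ - ∑ i ∈ J, w i / L i * ‖g i‖ ^ 2) :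
    Breg ψ y (xs - t • ∑ i ∈ J, w i • g i) z ≤
      Breg ψ x xs z -
        (t / Lmax - t ^ 2 / (2 * μ) *
          (‖∑ i ∈ J, w i • g i‖ ^ 2 / ∑ i ∈ J, w i * ‖g i‖ ^ 2)) *
        ∑ i ∈ J, w i * ‖g i‖ ^ 2 := by
  have hsum := sum_mul_div_le_sum_div_mul hw (fun i _ => sq_nonneg ‖g i‖) hL hLmax
  set α := ∑ i ∈ J, w i • g i
  set S := ∑ i ∈ J, w i * ‖g i‖ ^ 2
  have hcut : ⟪α, z - x⟫ ≤ -(S / Lmax) := by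
    rw [inner_sub_right]
    linarith
  calc Breg ψ y (xs - t • α) z
      ≤ Breg ψ x xs z + ⟪t • α, z - x⟫ + ‖t • α‖ ^ 2 / (2 * μ) :=
        breg_sub_le_breg_add_inner_add hμ hy (t • α) z
    _ = Breg ψ x xs z + t * ⟪α, z - x⟫ + t ^ 2 * ‖α‖ ^ 2 / (2 * μ) := by
        rw [real_inner_smul_left, norm_smul, mul_pow, Real.norm_eq_abs, sq_abs]
    _ ≤ Breg ψ x xs z + t * -(S / Lmax) + t ^ 2 * ‖α‖ ^ 2 / (2 * μ) := by gcongr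
    _ = Breg ψ x xs z - (t / Lmax - t ^ 2 / (2 * μ) * (‖α‖ ^ 2 / S)) * S := by
        field_simp
        ring

/-- Basic descent lemma, part (a): for any stepsize
`t ∈ (0, 2μ/(L_max·L_adapt))` and every `z` in the separating halfspace `H`:
`D_ψ^{x⁺*}(x⁺, z) ≤ D_ψ^{xs}(x, z) − (t/L_max − (t²/(2μ))·L_adapt)·∑ w_i‖∇f_i(x)‖²`. -/
theorem stmt8 {n m : ℕ} (ψ : EuclideanSpace ℝ (Fin n) → ℝ) (μ : ℝ) (hμ : 0 < μ)
    (hψconv : ConvexOn ℝ Set.univ ψ) (hsc : SubgradStrongConvex ψ μ)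
    (f : Fin m → EuclideanSpace ℝ (Fin n) → ℝ)
    (hfconv : ∀ i, ConvexOn ℝ Set.univ (f i))
    (f' : Fin m → EuclideanSpace ℝ (Fin n) → EuclideanSpace ℝ (Fin n))
    (hdiff : ∀ i z, HasGradientAt (f i) (f' i z) z)
    (L : Fin m → ℝ) (hL : ∀ i, 0 < L i)
    (hlip : ∀ i z w, ‖f' i z - f' i w‖ ≤ L i * ‖z - w‖)
    (Lmax : ℝ) (hm : 0 < m) (hLmax : Lmax = ⨆ i, L i)
    (x xs : EuclideanSpace ℝ (Fin n)) (hxs : IsSubgrad ψ x xs)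
    (J : Finset (Fin m)) (w : Fin m → ℝ)
    (hw : ∀ i ∈ J, 0 < w i) (hwsum : ∑ i ∈ J, w i = 1)
    (hpos : 0 < ∑ i ∈ J, w i * ‖f' i x‖ ^ 2)
    (t : ℝ) (htpos : 0 < t)
    (htlt : t < 2 * μ /
      (Lmax * (‖∑ i ∈ J, w i • f' i x‖ ^ 2 / ∑ i ∈ J, w i * ‖f' i x‖ ^ 2))) :
    ∀ z, (⟪∑ i ∈ J, w i • f' i x, z⟫ ≤
        ⟪∑ i ∈ J, w i • f' i x, x⟫ - ∑ i ∈ J, w i / L i * ‖f' i x‖ ^ 2) →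
      Breg ψ (gradient (fenchel ψ) (xs - t • ∑ i ∈ J, w i • f' i x))
          (xs - t • ∑ i ∈ J, w i • f' i x) z ≤
        Breg ψ x xs z -
          (t / Lmax - t ^ 2 / (2 * μ) *
            (‖∑ i ∈ J, w i • f' i x‖ ^ 2 / ∑ i ∈ J, w i * ‖f' i x‖ ^ 2)) *
          ∑ i ∈ J, w i * ‖f' i x‖ ^ 2 :=
  fun _ hz =>
    stmt8_general hμ (hsc.mul_norm_sq_le_breg hxs _) (fun i hi => (hw i hi).le) (fun i _ => hL i)
      (fun i _ => hLmax ▸ le_ciSup (Set.finite_range L).bddAbove i) hpos htpos.le hz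
end
end
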